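/- arXiv:math/0509474 — 5 statements merged into one kernel-verified Lean document; each statement's English description precedes it below -/
import Mathlib

section
/- For every 0 ≤ k ≤ n, the k-th Kneser–Hecke operator T_k : V → V, defined on basis vectors by T_k([C]) = Σ_{D ∈ F, dim(C∩D) = n−k} [D], is a self-adjoint linear operator with respect to the Hermitian inner product on V, i.e. (T_k v, w) = (v, T_k w) for all v, w ∈ V. -/
noncomputable section

namespace KneserHeckeCodes

open Finset

variable {F : Type} [Field F] [Fintype F]

/-- The all-ones vector. -/
def allOnes (F : Type) [One F] (N : ℕ) : Fin N → F := fun _ => 1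

/-- The dual code with respect to the (bilinear or Hermitian) form
`b(x,y) = ∑ i, x i * f (y i)`. -/
def dualCode {N : ℕ} (f : F → F) (C : Submodule F (Fin N → F)) : Submodule F (Fin N → F) where
  carrier := {v | ∀ c ∈ C, ∑ i, v i * f (c i) = 0}
  add_mem' := by
    intro a b ha hb c hc
    have h1 := ha c hc
    have h2 := hb c hc
    simp [Pi.add_apply, add_mul, Finset.sum_add_distrib, h1, h2]
  zero_mem' := by
    intro c hc
    simp
  smul_mem' := by
    intro r a ha c hc
    have h := ha c hc
    simp [Pi.smul_apply, smul_eq_mul, mul_assoc, ← Finset.mul_sum, h]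

/-- Action of a coordinate permutation on a code. -/
def permCode {N : ℕ} (π : Equiv.Perm (Fin N)) (C : Submodule F (Fin N → F)) :
    Submodule F (Fin N → F) :=
  C.map (LinearMap.funLeft F F π)

/-- Permutation equivalence of codes. -/
def equivCode {N : ℕ} (C D : Submodule F (Fin N → F)) : Prop :=
  ∃ π : Equiv.Perm (Fin N), permCode π C = D

/-- The order of the automorphism group of a code. -/
def autCard {N : ℕ} (C : Submodule F (Fin N → F)) : ℕ :=
  Nat.card {π : Equiv.Perm (Fin N) // permCode π C = C}

/-- `mon c v` is the number of columns of the `m × N` matrix with rows `c` equal to `v`. -/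
def mon {m N : ℕ} (c : Fin m → (Fin N → F)) (v : Fin m → F) : ℕ :=
  Nat.card {i : Fin N // ∀ j, c j i = v j}

/-- `aX X C` is the number of `m`-tuples of codewords of `C` with monomial `X`. -/
def aX {m N : ℕ} (X : (Fin m → F) → ℕ) (C : Submodule F (Fin N → F)) : ℕ :=
  Nat.card {c : Fin m → (Fin N → F) // (∀ j, c j ∈ C) ∧ mon c = X}

/-- The set `M_m` of monomials of degree `N` in genus `m`. -/
def MmSet (F : Type) [Fintype F] (m N : ℕ) : Set ((Fin m → F) → ℕ) :=
  {X | ∑ v, X v = N}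

/-- The rank of a monomial. -/
def rkX (F : Type) [Field F] {m : ℕ} (X : (Fin m → F) → ℕ) : ℕ :=
  Module.finrank F (Submodule.span F {v : Fin m → F | 0 < X v})

/-- The set `M*_m` of monomials of degree `N` and full rank `m`. -/
def MstarSet (F : Type) [Field F] [Fintype F] (m N : ℕ) : Set ((Fin m → F) → ℕ) :=
  {X | X ∈ MmSet F m N ∧ rkX F X = m}

instance finiteSubmodule {N : ℕ} : Finite (Submodule F (Fin N → F)) :=
  Finite.of_injective (fun C => (C : Set (Fin N → F))) SetLike.coe_injective

/-- The set of equivalence classes of codes in the family `𝓕`. -/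
abbrev ClassesB {N : ℕ} (𝓕 : Set (Submodule F (Fin N → F))) : Type :=
  Quot (fun C D : 𝓕 => equivCode C.1 D.1)

/-- The equivalence class of a code. -/
def clsOf {N : ℕ} {𝓕 : Set (Submodule F (Fin N → F))} (C : 𝓕) : ClassesB 𝓕 :=
  Quot.mk _ C

/-- A representative of an equivalence class. -/
def repB {N : ℕ} {𝓕 : Set (Submodule F (Fin N → F))} (b : ClassesB 𝓕) : 𝓕 :=
  Quot.out b

/-- The Hermitian inner product on `V` with `([C],[D]) = |Aut C| δ_{[C],[D]}`. -/
def innerV {N : ℕ} (𝓕 : Set (Submodule F (Fin N → F))) (v w : ClassesB 𝓕 → ℂ) : ℂ :=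
  letI : Fintype (ClassesB 𝓕) := Fintype.ofFinite _
  ∑ b : ClassesB 𝓕, (starRingEnd ℂ) (v b) * w b * (autCard (repB b).1 : ℂ)

/-- The `k`-th Kneser-Hecke operator `T_k` on `V`, where `n` is the dimension of the codes:
`T_k [C] = ∑_{D ∈ 𝓕, dim (C ⊓ D) = n - k} [D]`. -/
def heckeT {N : ℕ} (𝓕 : Set (Submodule F (Fin N → F))) (n k : ℕ)
    (v : ClassesB 𝓕 → ℂ) : ClassesB 𝓕 → ℂ :=
  letI : Fintype (ClassesB 𝓕) := Fintype.ofFinite _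
  fun b' => ∑ b : ClassesB 𝓕, v b *
    (Nat.card {D : 𝓕 // Module.finrank F ↥((repB b).1 ⊓ D.1) + k = n ∧ clsOf D = b'} : ℂ)

/-- The linear extension of `a_X` to `V`. -/
def aXc {N m : ℕ} (𝓕 : Set (Submodule F (Fin N → F))) (X : (Fin m → F) → ℕ)
    (v : ClassesB 𝓕 → ℂ) : ℂ :=
  letI : Fintype (ClassesB 𝓕) := Fintype.ofFinite _
  ∑ b : ClassesB 𝓕, v b * (aX X (repB b).1 : ℂ)

/-- `V_m`, the joint kernel of all `a_X`, `X ∈ M_m`. -/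
def VmSet {N : ℕ} (𝓕 : Set (Submodule F (Fin N → F))) (m : ℕ) : Set (ClassesB 𝓕 → ℂ) :=
  {v | ∀ X ∈ MmSet F m N, aXc 𝓕 X v = 0}

/-- `V_{m-1}` (with `V_{-1} = V`). -/
def VmPred {N : ℕ} (𝓕 : Set (Submodule F (Fin N → F))) (m : ℕ) : Set (ClassesB 𝓕 → ℂ) :=
  match m with
  | 0 => Set.univ
  | m + 1 => VmSet 𝓕 m

/-- `W_m = V_m^⊥`. -/
def WmSet {N : ℕ} (𝓕 : Set (Submodule F (Fin N → F))) (m : ℕ) : Set (ClassesB 𝓕 → ℂ) :=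
  {w | ∀ v ∈ VmSet 𝓕 m, innerV 𝓕 w v = 0}

/-- `Y_m = W_m ∩ V_{m-1}`. -/
def YmSet {N : ℕ} (𝓕 : Set (Submodule F (Fin N → F))) (m : ℕ) : Set (ClassesB 𝓕 → ℂ) :=
  WmSet 𝓕 m ∩ VmPred 𝓕 m

/-- `∑_{E ∈ E_C(c)} α_E`, counted as the number of pairs `(E, D)` with `E ≤ C` of
dimension `n-1` containing all entries of `c` and `D ∈ 𝓕` with `D ⊓ C = E`. -/
def pairCount {N : ℕ} (𝓕 : Set (Submodule F (Fin N → F))) (n : ℕ)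
    (C : Submodule F (Fin N → F)) {m : ℕ} (c : Fin m → (Fin N → F)) : ℕ :=
  Nat.card {ED : Submodule F (Fin N → F) × 𝓕 //
    ED.1 ≤ C ∧ Module.finrank F ↥ED.1 + 1 = n ∧ (∀ j, c j ∈ ED.1) ∧ ED.2.1 ⊓ C = ED.1}

/-- Condition ⋆ at level `m` for the subset `M⁰ ⊆ M*_m` with constant `α`. -/
def CondStar {N : ℕ} (𝓕 : Set (Submodule F (Fin N → F))) (n m : ℕ)
    (M0 : Set ((Fin m → F) → ℕ)) (α : ℕ) : Prop :=
  M0 ⊆ MstarSet F m N ∧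
  VmSet 𝓕 m = {v | v ∈ VmPred 𝓕 m ∧ ∀ X ∈ M0, aXc 𝓕 X v = 0} ∧
  ∀ C ∈ 𝓕, ∀ c : Fin m → (Fin N → F), (∀ j, c j ∈ C) → mon c ∈ M0 →
    pairCount 𝓕 n C c = α

/-- The genus-`m` complete weight enumerator. -/
def cwe {N : ℕ} (m : ℕ) (C : Submodule F (Fin N → F)) : MvPolynomial (Fin m → F) ℂ :=
  letI : Fintype C := Fintype.ofFinite _
  ∑ c : Fin m → C, MvPolynomial.monomial
    (Finsupp.equivFunOnFinite.symm (mon (fun j => (c j : Fin N → F)))) (1 : ℂ)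

end KneserHeckeCodes

open KneserHeckeCodes

/-!
In the basis of classes, the matrix entry `(b, b')` of `T_k` counts the `k`-neighbors of a
representative `C` of `b` lying in the class `b'` of `D`. Multiplied by `|Aut D|` it counts, by
orbit–stabilizer, the permutations `π` for which `C` and `π D` are `k`-neighbors. Replacing `π` by
its inverse exchanges the roles of `C` and `D`, so the weights `|Aut|` of the Hermitian form
symmetrize the matrix, whose entries are moreover real.
-/

namespace KneserHeckeCodes

open MulAction Module Pointwise

section GroupAction

variable {G X : Type*} [Group G] [MulAction G X]

theorem card_subtype_smul (p : X → Prop) (x : X) :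
    Nat.card {g : G // p (g • x)} =
      Nat.card {y : X // p y ∧ y ∈ orbit G x} * Nat.card (stabilizer G x) := by
  let cosets : Set (G ⧸ stabilizer G x) := {q | p (ofQuotientStabilizer G x q)}
  have card_cosets : Nat.card cosets = Nat.card {y : X // p y ∧ y ∈ orbit G x} :=
    calc Nat.card cosets
      _ = Nat.card {y : orbit G x // p y} :=
        Nat.card_congr ((orbitEquivQuotientStabilizer G x).symm.subtypeEquiv fun _ => Iff.rfl)
      _ = Nat.card {y : X // p y ∧ y ∈ orbit G x} :=
        Nat.card_congr ((Equiv.subtypeSubtypeEquivSubtypeInter _ p).trans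
          (Equiv.subtypeEquivRight fun _ => and_comm))
  calc Nat.card {g : G // p (g • x)}
    _ = Nat.card (stabilizer G x × cosets) :=
      Nat.card_congr (QuotientGroup.preimageMkEquivSubgroupProdSet (stabilizer G x) cosets)
    _ = Nat.card {y : X // p y ∧ y ∈ orbit G x} * Nat.card (stabilizer G x) := by
      rw [Nat.card_prod, card_cosets, mul_comm]

theorem card_related_smul_comm {r : X → X → Prop} (hsymm : ∀ x y, r x y → r y x)
    (hsmul : ∀ (g : G) (x y : X), r (g • x) (g • y) ↔ r x y) (x y : X) :
    Nat.card {g : G // r x (g • y)} = Nat.card {g : G // r y (g • x)} := by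
  refine Nat.card_congr ((Equiv.inv G).subtypeEquiv fun g => ?_)
  calc r x (g • y)
    _ ↔ r (g⁻¹ • x) y := by rw [← hsmul g⁻¹, inv_smul_smul]
    _ ↔ r y (g⁻¹ • x) := ⟨hsymm _ _, hsymm _ _⟩

theorem card_related_orbit_mul_card_stabilizer_comm {r : X → X → Prop}
    (hsymm : ∀ x y, r x y → r y x) (hsmul : ∀ (g : G) (x y : X), r (g • x) (g • y) ↔ r x y)
    (x y : X) :
    Nat.card {z : X // r x z ∧ z ∈ orbit G y} * Nat.card (stabilizer G y) =
      Nat.card {z : X // r y z ∧ z ∈ orbit G x} * Nat.card (stabilizer G x) := by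
  rw [← card_subtype_smul (r x), ← card_subtype_smul (r y), card_related_smul_comm hsymm hsmul]

end GroupAction

section Neighbors

variable {R M : Type*} [Semiring R] [AddCommMonoid M] [Module R M]

/-- The relation `C ∼_k D` of being `k`-neighbors, for codes of dimension `n`: the intersection
`C ⊓ D` has dimension `n - k`. The condition is additive to avoid truncated subtraction. -/
def IsNeighbor (n k : ℕ) (C D : Submodule R M) : Prop :=
  finrank R ↥(C ⊓ D) + k = n

theorem IsNeighbor.symm {n k : ℕ} {C D : Submodule R M} (h : IsNeighbor n k C D) :
    IsNeighbor n k D C := by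
  rwa [IsNeighbor, inf_comm]

theorem isNeighbor_smul_smul_iff {G : Type*} [Group G] [DistribMulAction G M]
    [SMulCommClass G R M] (n k : ℕ) (g : G) (C D : Submodule R M) :
    IsNeighbor n k (g • C) (g • D) ↔ IsNeighbor n k C D := by
  let e : M ≃ₗ[R] M := DistribMulAction.toLinearEquiv R M g
  have finrank_smul_inf : finrank R ↥(g • C ⊓ g • D) = finrank R ↥(C ⊓ D) :=
    calc finrank R ↥(C.map e.toLinearMap ⊓ D.map e.toLinearMap)
      _ = finrank R ↥((C ⊓ D).map e.toLinearMap) := by rw [Submodule.map_inf _ e.injective]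
      _ = finrank R ↥(C ⊓ D) := e.finrank_map_eq _
  rw [IsNeighbor, IsNeighbor, finrank_smul_inf]

end Neighbors

section Classes

variable {F : Type} [Field F] {N : ℕ}

-- `permCode` composes in the reverse order, hence the action of `(Perm (Fin N))ᵈᵐᵃ`.
theorem permCode_eq_mk_smul (π : Equiv.Perm (Fin N)) (C : Submodule F (Fin N → F)) :
    permCode π C = DomMulAct.mk π • C :=
  rfl

theorem equivCode_iff_mem_orbit {C D : Submodule F (Fin N → F)} :
    equivCode C D ↔ C ∈ orbit (Equiv.Perm (Fin N))ᵈᵐᵃ D := by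
  rw [mem_orbit_symm, mem_orbit_iff, ← DomMulAct.mk.exists_congr_right]
  simp only [equivCode, permCode_eq_mk_smul]

theorem autCard_eq_card_stabilizer (C : Submodule F (Fin N → F)) :
    autCard C = Nat.card (stabilizer (Equiv.Perm (Fin N))ᵈᵐᵃ C) :=
  Nat.card_congr (DomMulAct.mk.subtypeEquiv fun _ => by
    rw [permCode_eq_mk_smul, mem_stabilizer_iff])

variable {𝓕 : Set (Submodule F (Fin N → F))}

theorem clsOf_eq_clsOf_iff {C D : 𝓕} :
    clsOf C = clsOf D ↔ C.1 ∈ orbit (Equiv.Perm (Fin N))ᵈᵐᵃ D.1 := by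
  have equivalence : Equivalence fun C D : 𝓕 => equivCode C.1 D.1 := by
    simp only [equivCode_iff_mem_orbit]
    exact ((orbitRel (Equiv.Perm (Fin N))ᵈᵐᵃ (Submodule F (Fin N → F))).comap Subtype.val).iseqv
  exact (equivalence.quot_mk_eq_iff C D).trans equivCode_iff_mem_orbit

/-- The number of `k`-neighbors of `C` in the class `b`: for `C` a representative of a class `a`,
this is the coefficient of `b` in `T_k a`. -/
def neighborCount (n k : ℕ) (C : 𝓕) (b : ClassesB 𝓕) : ℕ :=
  Nat.card {D : 𝓕 // IsNeighbor n k C.1 D.1 ∧ clsOf D = b}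

theorem neighborCount_clsOf (h𝓕 : ∀ C ∈ 𝓕, ∀ π : Equiv.Perm (Fin N), permCode π C ∈ 𝓕)
    (n k : ℕ) (C D : 𝓕) :
    neighborCount n k C (clsOf D) = Nat.card {E : Submodule F (Fin N → F) //
      IsNeighbor n k C.1 E ∧ E ∈ orbit (Equiv.Perm (Fin N))ᵈᵐᵃ D.1} := by
  have orbit_subset : ∀ E ∈ orbit (Equiv.Perm (Fin N))ᵈᵐᵃ D.1, E ∈ 𝓕 := by
    rintro _ ⟨g, rfl⟩
    exact h𝓕 D.1 D.2 (DomMulAct.mk.symm g)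
  simp only [neighborCount, clsOf_eq_clsOf_iff]
  exact Nat.card_congr (Equiv.subtypeSubtypeEquivSubtype
    (q := fun E => IsNeighbor n k C.1 E ∧ E ∈ orbit _ D.1) fun {E} h => orbit_subset E h.2)

theorem neighborCount_clsOf_mul_autCard_comm
    (h𝓕 : ∀ C ∈ 𝓕, ∀ π : Equiv.Perm (Fin N), permCode π C ∈ 𝓕) (n k : ℕ) (C D : 𝓕) :
    neighborCount n k C (clsOf D) * autCard D.1 =
      neighborCount n k D (clsOf C) * autCard C.1 := by
  simp only [neighborCount_clsOf h𝓕, autCard_eq_card_stabilizer]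
  exact card_related_orbit_mul_card_stabilizer_comm (r := IsNeighbor n k)
    (fun _ _ => IsNeighbor.symm) (isNeighbor_smul_smul_iff n k) C.1 D.1

theorem clsOf_repB (b : ClassesB 𝓕) : clsOf (repB b) = b :=
  Quot.out_eq b

theorem neighborCount_repB_mul_autCard_repB_comm
    (h𝓕 : ∀ C ∈ 𝓕, ∀ π : Equiv.Perm (Fin N), permCode π C ∈ 𝓕) (n k : ℕ) (a b : ClassesB 𝓕) :
    neighborCount n k (repB a) b * autCard (repB b).1 =
      neighborCount n k (repB b) a * autCard (repB a).1 := by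
  have h := neighborCount_clsOf_mul_autCard_comm h𝓕 n k (repB a) (repB b)
  rwa [clsOf_repB, clsOf_repB] at h

end Classes

end KneserHeckeCodes

theorem kneserHeckeOperator_selfAdjoint_general {F : Type} [Field F] [Fintype F] {N : ℕ}
    (𝓕 : Set (Submodule F (Fin N → F)))
    (h𝓕 : ∀ C ∈ 𝓕, ∀ π : Equiv.Perm (Fin N), permCode π C ∈ 𝓕) (n k : ℕ)
    (v w : ClassesB 𝓕 → ℂ) :
    innerV 𝓕 (heckeT 𝓕 n k v) w = innerV 𝓕 v (heckeT 𝓕 n k w) := by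
  let A (b b' : ClassesB 𝓕) : ℂ := neighborCount n k (repB b) b'
  let m (b : ClassesB 𝓕) : ℂ := autCard (repB b).1
  have symmetrized (b b' : ClassesB 𝓕) : A b b' * m b' = A b' b * m b := by
    simp only [A, m]
    exact_mod_cast neighborCount_repB_mul_autCard_repB_comm h𝓕 n k b b'
  let : Fintype (ClassesB 𝓕) := Fintype.ofFinite _
  calc innerV 𝓕 (heckeT 𝓕 n k v) w
    _ = ∑ b', starRingEnd ℂ (∑ b, v b * A b b') * w b' * m b' := rfl
    _ = ∑ b, ∑ b', starRingEnd ℂ (v b) * w b' * (A b b' * m b') := by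
      simp only [A, map_sum, map_mul, Complex.conj_natCast, Finset.sum_mul]
      rw [Finset.sum_comm]
      simp only [mul_assoc, mul_left_comm]
    _ = ∑ b, ∑ b', starRingEnd ℂ (v b) * w b' * (A b' b * m b) := by
      simp only [symmetrized]
    _ = ∑ b, starRingEnd ℂ (v b) * (∑ b', w b' * A b' b) * m b := by
      simp only [Finset.mul_sum, Finset.sum_mul, mul_assoc]
    _ = innerV 𝓕 v (heckeT 𝓕 n k w) := rfl

/-- For every `0 ≤ k ≤ n`, the `k`-th Kneser-Hecke operator `T_k` is a
self-adjoint linear operator on `V` with respect to the Hermitian inner product. -/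
theorem kneserHeckeOperator_selfAdjoint
    {F : Type} [Field F] [Fintype F] {n : ℕ}
    (σ : F →+* F) (hσ : ∀ x, σ (σ x) = x)
    (𝓕 : Set (Submodule F (Fin (2 * n) → F)))
    (h𝓕ne : 𝓕.Nonempty)
    (h𝓕sd : ∀ C ∈ 𝓕, C = dualCode (⇑σ) C)
    (h𝓕cl : ∀ C ∈ 𝓕, ∀ π : Equiv.Perm (Fin (2 * n)), permCode π C ∈ 𝓕)
    (k : ℕ) (hk : k ≤ n)
    (v w : ClassesB 𝓕 → ℂ) :
    innerV 𝓕 (heckeT 𝓕 n k v) w = innerV 𝓕 v (heckeT 𝓕 n k w) :=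
  kneserHeckeOperator_selfAdjoint_general 𝓕 h𝓕cl n k v w
end
end

section
/- Let q be odd, let C = C^⊥ ≤ F_q^{2n} be a self-dual code, let 0 ≤ m ≤ n, and let c^(1), …, c^(m) ∈ C be linearly independent. Then Σ_E #{D ≤ F_q^{2n} : D = D^⊥ and D ∩ C = E} = (q^{n−m} − 1)/(q − 1), where the sum runs over all subspaces E ≤ C with dim E = n−1 and c^(i) ∈ E for all i. -/
noncomputable section

open KneserHeckeCodes

/-!
Let `E` be a hyperplane of the self-dual space `C`. Then `E⊥ = C + ⟨v⟩`, where `v` can be chosen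
isotropic because `2` is invertible. An isotropic vector `y + a v` of `E⊥` with `y ∈ C` satisfies
`2 a B(v, y) = 0`, so it lies in `C` or in `E + ⟨v⟩`; hence `D = E + ⟨v⟩` is the only self-dual
space with `D ∩ C = E`. It remains to count the hyperplanes of `C` containing `S = ⟨c⟩`, which are
the points of the projective space of `(C / S)*`.
-/

open Module

section IsSelfDual

variable {F V : Type*} [Field F] [AddCommGroup V] [Module F V] {B : LinearMap.BilinForm F V}
  {C D E : Submodule F V} {v x y : V}

/-- A subspace is self-dual for a bilinear form `B` if it equals its (right) orthogonal; for
`dotProductBilin` these are the self-dual codes. -/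
def IsSelfDual (B : LinearMap.BilinForm F V) (C : Submodule F V) : Prop :=
  C = B.orthogonal C

namespace IsSelfDual

theorem orthogonal_eq (hC : IsSelfDual B C) : B.orthogonal C = C :=
  hC.symm

theorem mem_iff (hC : IsSelfDual B C) : x ∈ C ↔ ∀ y ∈ C, B y x = 0 := by
  conv_lhs => rw [← hC.orthogonal_eq]
  exact LinearMap.BilinForm.mem_orthogonal_iff

theorem apply_eq_zero (hC : IsSelfDual B C) (hx : x ∈ C) (hy : y ∈ C) : B x y = 0 :=
  hC.mem_iff.1 hy x hx

theorem eq_of_le (hC : IsSelfDual B C) (hD : IsSelfDual B D) (h : C ≤ D) : C = D :=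
  h.antisymm fun _ hx => hC.mem_iff.2 fun _ hy => hD.apply_eq_zero (h hy) hx

theorem two_mul_finrank [FiniteDimensional F V] (hC : IsSelfDual B C) (hB : B.Nondegenerate) :
    2 * finrank F C = finrank F V := by
  have hfin := LinearMap.BilinForm.finrank_orthogonal hB C
  rw [hC.orthogonal_eq] at hfin
  have := C.finrank_le
  omega

theorem exists_add_isotropic (hC : IsSelfDual B C) (hs : B.IsSymm) (h2 : (2 : F) ≠ 0) (x : V) :
    ∃ y ∈ C, B (x + y) (x + y) = 0 := by
  by_cases hx : x ∈ C
  · exact ⟨-x, C.neg_mem hx, by simp⟩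
  obtain ⟨y, hy, hyx⟩ : ∃ y ∈ C, B y x ≠ 0 := by
    simpa using mt hC.mem_iff.2 hx
  -- As `B y y = 0`, `B (x + t • y) (x + t • y) = B x x + 2 * t * B y x` is linear in `t`.
  refine ⟨-(B x x / (2 * B y x)) • y, C.smul_mem _ hy, ?_⟩
  have hxy : B x y = B y x := hs.eq x y
  simp only [map_add, LinearMap.add_apply, map_smul, LinearMap.smul_apply, smul_eq_mul, hxy,
    hC.apply_eq_zero hy hy]
  field_simp
  ring

end IsSelfDual

theorem sup_span_singleton_inf_eq (hEC : E ≤ C) (hvC : v ∉ C) :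
    (E ⊔ Submodule.span F {v}) ⊓ C = E := by
  have hdisj : Submodule.span F {v} ⊓ C = ⊥ :=
    (Submodule.disjoint_span_singleton_of_notMem hvC).symm.eq_bot
  rw [sup_inf_assoc_of_le _ hEC, hdisj, sup_bot_eq]

theorem mem_orthogonal_sup_span_singleton_iff :
    x ∈ B.orthogonal (E ⊔ Submodule.span F {v}) ↔ x ∈ B.orthogonal E ∧ B v x = 0 := by
  change E ⊔ Submodule.span F {v} ≤ LinearMap.ker (B.flip x) ↔ E ≤ LinearMap.ker (B.flip x) ∧ _
  rw [sup_le_iff, Submodule.span_singleton_le_iff_mem, LinearMap.mem_ker]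
  rfl

theorem orthogonal_covBy_orthogonal [FiniteDimensional F V] (hB : B.Nondegenerate)
    (hr : B.IsRefl) (h : E ⋖ C) : B.orthogonal C ⋖ B.orthogonal E := by
  have hinv : Function.Involutive B.orthogonal :=
    LinearMap.BilinForm.orthogonal_orthogonal hB hr
  have hanti : StrictAnti B.orthogonal :=
    Antitone.strictAnti_of_injective (fun _ _ => LinearMap.BilinForm.orthogonal_le) hinv.injective
  refine ⟨hanti h.lt, fun X hCX hXE => h.2 (c := B.orthogonal X) ?_ ?_⟩
  · simpa only [hinv E] using hanti hXE
  · simpa only [hinv C] using hanti hCX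

namespace IsSelfDual

theorem covBy_orthogonal [FiniteDimensional F V] (hC : IsSelfDual B C) (hB : B.Nondegenerate)
    (hr : B.IsRefl) (hEC : E ⋖ C) : C ⋖ B.orthogonal E := by
  have h := orthogonal_covBy_orthogonal hB hr hEC
  rwa [hC.orthogonal_eq] at h

theorem inf_ker_eq_of_covBy (hC : IsSelfDual B C) (hr : B.IsRefl) (hEC : E ⋖ C)
    (hvE : v ∈ B.orthogonal E) (hvC : v ∉ C) : C ⊓ LinearMap.ker (B v) = E := by
  have hle : E ≤ LinearMap.ker (B v) := fun y hy => hr _ _ (hvE y hy)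
  refine (hEC.eq_or_eq (le_inf hEC.le hle) inf_le_left).resolve_right fun h => hvC ?_
  exact hC.mem_iff.2 fun y hy => hr _ _ (inf_eq_left.1 h hy)

variable [FiniteDimensional F V]

theorem exists_eq_add_smul (hC : IsSelfDual B C) (hB : B.Nondegenerate) (hr : B.IsRefl)
    (hEC : E ⋖ C) (hvE : v ∈ B.orthogonal E) (hvC : v ∉ C) (hx : x ∈ B.orthogonal E) :
    ∃ y ∈ C, ∃ a : F, x = y + a • v := by
  have hcov := hC.covBy_orthogonal hB hr hEC
  have hle : C ⊔ Submodule.span F {v} ≤ B.orthogonal E :=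
    sup_le hcov.le ((Submodule.span_singleton_le_iff_mem _ _).2 hvE)
  have hsup : C ⊔ Submodule.span F {v} = B.orthogonal E :=
    (hcov.eq_or_eq le_sup_left hle).resolve_left fun h =>
      hvC (h ▸ Submodule.mem_sup_right (Submodule.mem_span_singleton_self v))
  rw [← hsup, Submodule.mem_sup] at hx
  obtain ⟨y, hy, z, hz, rfl⟩ := hx
  obtain ⟨a, rfl⟩ := Submodule.mem_span_singleton.1 hz
  exact ⟨y, hy, a, rfl⟩

theorem sup_span_singleton (hC : IsSelfDual B C) (hB : B.Nondegenerate) (hr : B.IsRefl)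
    (hEC : E ⋖ C) (hvE : v ∈ B.orthogonal E) (hvC : v ∉ C) (hvv : B v v = 0) :
    IsSelfDual B (E ⊔ Submodule.span F {v}) := by
  apply le_antisymm
  · refine sup_le (fun x hx => ?_) ((Submodule.span_singleton_le_iff_mem _ _).2 ?_)
    · exact mem_orthogonal_sup_span_singleton_iff.2
        ⟨fun y hy => hC.apply_eq_zero (hEC.le hy) (hEC.le hx), hr _ _ (hvE x hx)⟩
    · exact mem_orthogonal_sup_span_singleton_iff.2 ⟨hvE, hvv⟩
  · intro x hx
    obtain ⟨hxE, hvx⟩ := mem_orthogonal_sup_span_singleton_iff.1 hx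
    obtain ⟨y, hy, a, rfl⟩ := hC.exists_eq_add_smul hB hr hEC hvE hvC hxE
    have hvy : B v y = 0 := by simpa [hvv] using hvx
    have hyE : y ∈ E := hC.inf_ker_eq_of_covBy hr hEC hvE hvC ▸ ⟨hy, hvy⟩
    exact Submodule.add_mem_sup hyE (Submodule.mem_span_singleton.2 ⟨a, rfl⟩)

theorem mem_or_mem_sup_span_singleton (hC : IsSelfDual B C) (hB : B.Nondegenerate)
    (hs : B.IsSymm) (h2 : (2 : F) ≠ 0) (hEC : E ⋖ C) (hvE : v ∈ B.orthogonal E) (hvC : v ∉ C)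
    (hvv : B v v = 0) (hx : x ∈ B.orthogonal E) (hxx : B x x = 0) :
    x ∈ C ∨ x ∈ E ⊔ Submodule.span F {v} := by
  obtain ⟨y, hy, a, rfl⟩ := hC.exists_eq_add_smul hB hs.isRefl hEC hvE hvC hx
  have hyv : B y v = B v y := hs.eq y v
  have hprod : 2 * (a * B v y) = 0 := by
    simpa [hC.apply_eq_zero hy hy, hvv, hyv, two_mul] using hxx
  rcases mul_eq_zero.1 ((mul_eq_zero.1 hprod).resolve_left h2) with rfl | hvy
  · left
    simpa using hy
  · right
    have hyE : y ∈ E := hC.inf_ker_eq_of_covBy hs.isRefl hEC hvE hvC ▸ ⟨hy, hvy⟩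
    exact Submodule.add_mem_sup hyE (Submodule.mem_span_singleton.2 ⟨a, rfl⟩)

theorem existsUnique_inf_eq (hC : IsSelfDual B C) (hB : B.Nondegenerate) (hs : B.IsSymm)
    (h2 : (2 : F) ≠ 0) (hEC : E ⋖ C) : ∃! D, IsSelfDual B D ∧ D ⊓ C = E := by
  have hcov := hC.covBy_orthogonal hB hs.isRefl hEC
  obtain ⟨u, huE, huC⟩ := SetLike.exists_of_lt hcov.lt
  obtain ⟨y, hy, hvv⟩ := hC.exists_add_isotropic hs h2 u
  have hvE : u + y ∈ B.orthogonal E := add_mem huE (hcov.le hy)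
  have hvC : u + y ∉ C := fun h => huC ((C.add_mem_iff_left hy).1 h)
  have hself := hC.sup_span_singleton hB hs.isRefl hEC hvE hvC hvv
  refine ⟨_, ⟨hself, sup_span_singleton_inf_eq hEC.le hvC⟩, fun D ⟨hD, hDC⟩ => ?_⟩
  refine hD.eq_of_le hself fun x hx => ?_
  have hED : E ≤ D := hDC ▸ inf_le_left
  have hxE : x ∈ B.orthogonal E := fun a ha => hD.apply_eq_zero (hED ha) hx
  rcases hC.mem_or_mem_sup_span_singleton hB hs h2 hEC hvE hvC hvv hxE (hD.apply_eq_zero hx hx)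
    with hxC | hxv
  · exact Submodule.mem_sup_left (hDC ▸ ⟨hx, hxC⟩)
  · exact hxv

end IsSelfDual

end IsSelfDual

section Counting

variable {F V : Type*} [Field F] [AddCommGroup V] [Module F V] [FiniteDimensional F V]

theorem covBy_iff_finrank {E C : Submodule F V} :
    E ⋖ C ↔ E ≤ C ∧ finrank F E + 1 = finrank F C := by
  rw [← and_iff_right_of_imp (fun h : E ⋖ C => h.le)]
  refine and_congr_right fun hEC => ?_
  have hquot := (E.comap C.subtype).finrank_quotient_add_finrank
  rw [(Submodule.comapSubtypeEquivOfLe hEC).finrank_eq] at hquot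
  rw [covBy_iff_quot_is_simple hEC, isSimpleModule_iff_finrank_eq_one (R := F)]
  omega

variable [Fintype F]

variable (F V) in
theorem card_isAtom :
    Nat.card {L : Submodule F V // IsAtom L} =
      (Fintype.card F ^ finrank F V - 1) / (Fintype.card F - 1) := by
  simp only [Submodule.isAtom_iff_finrank_eq_one]
  rw [← Nat.card_congr (Projectivization.equivSubmodule F V), Projectivization.card'' F V,
    Module.natCard_eq_pow_finrank (K := F), Nat.card_eq_fintype_card]

variable (F V) in
theorem card_isCoatom :
    Nat.card {H : Submodule F V // IsCoatom H} =
      (Fintype.card F ^ finrank F V - 1) / (Fintype.card F - 1) := by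
  rw [← Subspace.dual_finrank_eq, ← card_isAtom F (Dual F V)]
  exact Nat.card_congr (Subspace.orderIsoFiniteDimensional.toEquiv.subtypeEquiv fun H =>
    (Subspace.orderIsoFiniteDimensional.isCoatom_iff H).symm)

theorem card_isCoatom_ge (S : Submodule F V) :
    Nat.card {H : Submodule F V // S ≤ H ∧ IsCoatom H} =
      (Fintype.card F ^ (finrank F V - finrank F S) - 1) / (Fintype.card F - 1) := by
  rw [← S.finrank_quotient, ← card_isCoatom F (V ⧸ S)]
  let quotientCoatoms :
      {H : Set.Ici S // IsCoatom H} ≃ {H : Submodule F (V ⧸ S) // IsCoatom H} :=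
    S.comapMkQRelIso.symm.toEquiv.subtypeEquiv fun H =>
      (OrderIso.isCoatom_iff S.comapMkQRelIso.symm H).symm
  refine Nat.card_congr (Equiv.trans ?_ quotientCoatoms)
  refine (Equiv.subtypeSubtypeEquivSubtypeInter (S ≤ ·) IsCoatom).symm.trans
    (Equiv.subtypeEquivRight fun H => ?_)
  exact ⟨fun h => h.Ici H.2, IsCoatom.of_isCoatom_coe_Ici⟩

theorem card_covBy_ge {S C : Submodule F V} (hSC : S ≤ C) :
    Nat.card {E : Submodule F V // S ≤ E ∧ E ⋖ C} =
      (Fintype.card F ^ (finrank F C - finrank F S) - 1) / (Fintype.card F - 1) := by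
  rw [← (Submodule.comapSubtypeEquivOfLe hSC).finrank_eq, ← card_isCoatom_ge]
  refine (Nat.card_congr ((C.mapIic.toEquiv.subtypeEquiv fun H => ?_).trans
    (Equiv.subtypeSubtypeEquivSubtype fun h => h.2.le))).symm
  refine and_congr ?_ ((OrderIso.isCoatom_iff C.mapIic H).symm.trans Set.Iic.isCoatom_iff)
  change _ ≤ _ ↔ S ≤ H.map C.subtype
  rw [← Submodule.map_le_map_iff_of_injective C.injective_subtype, Submodule.map_comap_subtype,
    inf_of_le_right hSC]

end Counting

theorem card_subtype_prod_of_existsUnique {α β : Type*} {p : α → Prop} {r : α → β → Prop}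
    (h : ∀ a, p a → ∃! b, r a b) :
    Nat.card {x : α × β // p x.1 ∧ r x.1 x.2} = Nat.card {a // p a} := by
  refine Nat.card_eq_of_bijective (fun x => ⟨x.1.1, x.2.1⟩) ⟨?_, ?_⟩
  · rintro ⟨⟨a, b⟩, ha, hb⟩ ⟨⟨_, b'⟩, _, hb'⟩ ⟨⟩
    cases (h a ha).unique hb hb'
    rfl
  · rintro ⟨a, ha⟩
    obtain ⟨b, hb⟩ := (h a ha).exists
    exact ⟨⟨(a, b), ha, hb⟩, rfl⟩

theorem two_ne_zero_of_odd_card {F : Type*} [Field F] [Fintype F] (hq : Odd (Fintype.card F)) :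
    (2 : F) ≠ 0 :=
  Ring.two_ne_zero fun h =>
    Nat.not_even_iff_odd.2 hq (Nat.even_iff.2 (FiniteField.even_card_iff_char_two.1 h))

theorem sum_alphaE_qE_general {F V : Type*} [Field F] [Fintype F] [AddCommGroup V] [Module F V]
    [FiniteDimensional F V] (hq : Odd (Fintype.card F)) {B : LinearMap.BilinForm F V}
    (hB : B.Nondegenerate) (hs : B.IsSymm) {C S : Submodule F V} (hC : IsSelfDual B C)
    (hSC : S ≤ C) :
    Nat.card {ED : Submodule F V × Submodule F V //
        ED.1 ≤ C ∧ finrank F ED.1 + 1 = finrank F C ∧ S ≤ ED.1 ∧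
        IsSelfDual B ED.2 ∧ ED.2 ⊓ C = ED.1} =
      (Fintype.card F ^ (finrank F C - finrank F S) - 1) / (Fintype.card F - 1) := by
  have hunique (E : Submodule F V) (hE : S ≤ E ∧ E ⋖ C) : ∃! D, IsSelfDual B D ∧ D ⊓ C = E :=
    hC.existsUnique_inf_eq hB hs (two_ne_zero_of_odd_card hq) hE.2
  rw [← card_covBy_ge hSC, ← card_subtype_prod_of_existsUnique hunique]
  refine Nat.card_congr (Equiv.subtypeEquivRight fun ED => ?_)
  rw [covBy_iff_finrank]
  tauto

section DotProduct

variable {F : Type*} [Field F] {ι : Type*} [Fintype ι]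

theorem isSymm_dotProductBilin :
    LinearMap.BilinForm.IsSymm (dotProductBilin F F : LinearMap.BilinForm F (ι → F)) :=
  ⟨dotProduct_comm⟩

theorem nondegenerate_dotProductBilin :
    LinearMap.BilinForm.Nondegenerate (dotProductBilin F F : LinearMap.BilinForm F (ι → F)) := by
  classical
  exact .ofSeparatingLeft dotProduct_eq_zero

end DotProduct

theorem isSelfDual_dotProductBilin_iff {F : Type} [Field F] {N : ℕ}
    {C : Submodule F (Fin N → F)} :
    IsSelfDual (dotProductBilin F F) C ↔ C = dualCode id C := by
  have hdual : dualCode id C = LinearMap.BilinForm.orthogonal (dotProductBilin F F) C := by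
    ext v
    exact forall₂_congr fun c _ => by simp [dotProduct, mul_comm]
  rw [hdual, IsSelfDual]

/-- For `q` odd, a self-dual code `C ≤ F_q^{2n}` and linearly independent
`c^(1), …, c^(m) ∈ C` (`m ≤ n`), the number of pairs `(E, D)` with `E ≤ C` of dimension
`n-1` containing all `c^(i)` and `D` self-dual with `D ∩ C = E` equals
`(q^{n-m} - 1)/(q - 1)`. -/
theorem sum_alphaE_qE
    {F : Type} [Field F] [Fintype F] (hq : Odd (Fintype.card F)) {n : ℕ}
    (C : Submodule F (Fin (2 * n) → F)) (hC : C = dualCode (id : F → F) C)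
    {m : ℕ} (hm : m ≤ n) (c : Fin m → (Fin (2 * n) → F)) (hc : ∀ j, c j ∈ C)
    (hind : LinearIndependent F c) :
    Nat.card {ED : Submodule F (Fin (2 * n) → F) × Submodule F (Fin (2 * n) → F) //
        ED.1 ≤ C ∧ Module.finrank F ↥ED.1 + 1 = n ∧ (∀ j, c j ∈ ED.1) ∧
        ED.2 = dualCode (id : F → F) ED.2 ∧ ED.2 ⊓ C = ED.1} =
      (Fintype.card F ^ (n - m) - 1) / (Fintype.card F - 1) := by
  have hS : Submodule.span F (Set.range c) ≤ C :=
    Submodule.span_le.2 (Set.range_subset_iff.2 hc)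
  have hCn : Module.finrank F C = n := by
    have := (isSelfDual_dotProductBilin_iff.2 hC).two_mul_finrank nondegenerate_dotProductBilin
    rw [Module.finrank_fin_fun] at this
    omega
  simpa only [hCn, finrank_span_eq_card hind, Fintype.card_fin, Submodule.span_le,
    Set.range_subset_iff, SetLike.mem_coe, isSelfDual_dotProductBilin_iff] using
    sum_alphaE_qE_general hq nondegenerate_dotProductBilin isSymm_dotProductBilin
      (isSelfDual_dotProductBilin_iff.2 hC) hS
end
end

section
/- Let q be even, let C = C^⊥ ≤ F_q^{2n} be a self-dual code, let 0 ≤ m ≤ n−1, and let c^(1), …, c^(m) ∈ C satisfy dim⟨1, c^(1), …, c^(m)⟩ = m+1, where 1 = (1,…,1) is the all-ones vector. Then Σ_E #{D ≤ F_q^{2n} : D = D^⊥ and D ∩ C = E} = q·(q^{n−m−1} − 1)/(q − 1), where the sum runs over all subspaces E ≤ C with dim E = n−1 and c^(i) ∈ E for all i. -/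
noncomputable section

open KneserHeckeCodes

/-!
Let `S` be the span of the all-ones vector and the `c j`. In characteristic two
`b(v, v) = b(1, v) ^ 2`, so the all-ones vector lies in every self-dual code and `S^⊥` consists of
isotropic vectors. A pair `(E, D)` is the same as a self-dual `D ⊇ S` meeting `C` in a hyperplane.
Each isotropic `v ∉ C` lies in exactly one self-dual `D` meeting `C` in a hyperplane, namely
`(C ∩ v^⊥) + ⟨v⟩`, so the sets `D \ C` partition `S^⊥ \ C`. They have size `q^n - q^(n-1)`,
while `S^⊥ \ C` has size `q^(2n-m-1) - q^n`; the quotient is the number of pairs.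
-/

namespace KneserHeckeCodes

open LinearMap Module
open LinearMap (BilinForm)

section Lagrangian

variable {K V : Type*} [Field K] [AddCommGroup V] [Module K V] {B : BilinForm K V}
  {C D L S : Submodule K V} {v : V}

/-- A Lagrangian subspace: one equal to its own orthogonal complement. For the dot product on `Fⁿ`
these are the self-dual codes. -/
def IsLagrangian (B : BilinForm K V) (L : Submodule K V) : Prop :=
  L = B.orthogonal L

lemma IsLagrangian.mem_iff (hL : IsLagrangian B L) : v ∈ L ↔ ∀ w ∈ L, B w v = 0 := by
  conv_lhs => rw [hL]
  exact BilinForm.mem_orthogonal_iff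

lemma IsLagrangian.apply_eq_zero (hL : IsLagrangian B L) {v w : V} (hv : v ∈ L) (hw : w ∈ L) :
    B v w = 0 :=
  hL.mem_iff.1 hw v hv

lemma IsLagrangian.le_orthogonal (hL : IsLagrangian B L) (hS : S ≤ L) : L ≤ B.orthogonal S :=
  fun _ hv _ hs ↦ hL.apply_eq_zero (hS hs) hv

lemma IsLagrangian.mem_of_apply_self_eq_zero_iff (hrefl : B.IsRefl) {ω : V}
    (hω : ∀ v, B v v = 0 ↔ B ω v = 0) (hL : IsLagrangian B L) : ω ∈ L :=
  hL.mem_iff.2 fun w hw ↦ hrefl _ _ ((hω w).1 (hL.apply_eq_zero hw hw))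

/-- `D` is a (Kneser) neighbor of `C`: a Lagrangian subspace meeting `C` in a hyperplane of `C`. -/
structure IsNeighbor_s6 (B : BilinForm K V) (C D : Submodule K V) : Prop where
  isLagrangian : IsLagrangian B D
  finrank_inf_add_one : finrank K ↥(D ⊓ C) + 1 = finrank K C

/-- The neighbor of `C` through `v`, namely `(C ∩ v^⊥) + ⟨v⟩`. It is a neighbor of `C` when `C` is
Lagrangian and `v ∉ C` is isotropic. -/
def neighbor (B : BilinForm K V) (C : Submodule K V) (v : V) : Submodule K V :=
  C ⊓ ker (B v) ⊔ Submodule.span K {v}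

lemma mem_neighbor_self (B : BilinForm K V) (C : Submodule K V) (v : V) : v ∈ neighbor B C v :=
  Submodule.mem_sup_right (Submodule.mem_span_singleton_self v)

lemma neighbor_inf_self (hv : v ∉ C) : neighbor B C v ⊓ C = C ⊓ ker (B v) := by
  have hv₀ : v ≠ 0 := fun h ↦ hv (h ▸ C.zero_mem)
  have hdisj := (Submodule.disjoint_span_singleton' hv₀).2 hv
  rw [neighbor, sup_inf_assoc_of_le _ inf_le_left, hdisj.symm.eq_bot, sup_bot_eq]

lemma neighbor_le_orthogonal (hrefl : B.IsRefl) (hC : IsLagrangian B C) (hvv : B v v = 0) :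
    neighbor B C v ≤ B.orthogonal (neighbor B C v) := by
  intro y hy x hx
  obtain ⟨c, ⟨hc, hvc⟩, _, ha, rfl⟩ := Submodule.mem_sup.1 hx
  obtain ⟨d, ⟨hd, hvd⟩, _, hb, rfl⟩ := Submodule.mem_sup.1 hy
  obtain ⟨a, rfl⟩ := Submodule.mem_span_singleton.1 ha
  obtain ⟨b, rfl⟩ := Submodule.mem_span_singleton.1 hb
  simp [hC.apply_eq_zero hc hd, mem_ker.1 hvd, hrefl _ _ (mem_ker.1 hvc), hvv]

lemma IsLagrangian.span_insert_range_le (hrefl : B.IsRefl) {ω : V}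
    (hω : ∀ v, B v v = 0 ↔ B ω v = 0) (hL : IsLagrangian B L) {ι : Sort*} {c : ι → V}
    (hc : ∀ j, c j ∈ L) : Submodule.span K (insert ω (Set.range c)) ≤ L :=
  Submodule.span_le.2 <|
    Set.insert_subset (hL.mem_of_apply_self_eq_zero_iff hrefl hω) (Set.range_subset_iff.2 hc)

lemma card_pairs_eq_ncard_neighbors (hrefl : B.IsRefl) {ω : V} (hω : ∀ v, B v v = 0 ↔ B ω v = 0)
    {ι : Sort*} {c : ι → V} (hc : ∀ j, c j ∈ C) :
    Nat.card {ED : Submodule K V × Submodule K V //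
        ED.1 ≤ C ∧ finrank K ED.1 + 1 = finrank K C ∧ (∀ j, c j ∈ ED.1) ∧
        IsLagrangian B ED.2 ∧ ED.2 ⊓ C = ED.1} =
      {D | IsNeighbor_s6 B C D ∧ Submodule.span K (insert ω (Set.range c)) ≤ D}.ncard :=
  Nat.card_congr
    { toFun := fun ⟨(_, D), _, hdim, hcE, hD, hDE⟩ ↦
        ⟨D, ⟨hD, hDE ▸ hdim⟩, hD.span_insert_range_le hrefl hω fun j ↦ (hDE.ge (hcE j)).1⟩
      invFun := fun ⟨D, hD, hSD⟩ ↦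
        ⟨(D ⊓ C, D), inf_le_right, hD.finrank_inf_add_one,
          fun j ↦ ⟨hSD (Submodule.subset_span (.inr ⟨j, rfl⟩)), hc j⟩, hD.isLagrangian, rfl⟩
      left_inv := fun ⟨_, _, _, _, _, hDE⟩ ↦ Subtype.ext (Prod.ext hDE rfl)
      right_inv := fun ⟨_, _, _⟩ ↦ rfl }

variable [FiniteDimensional K V]

lemma finrank_inf_ker_add_one_of_not_le {W : Submodule K V} {f : Dual K V} (hf : ¬W ≤ ker f) :
    finrank K ↥(W ⊓ ker f) + 1 = finrank K W := by
  have hne : f.domRestrict W ≠ 0 := fun h ↦ hf fun w hw ↦ congr($h ⟨w, hw⟩)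
  rw [← Submodule.map_comap_subtype, ← ker_domRestrict, Submodule.finrank_map_subtype_eq]
  exact Dual.finrank_ker_add_one_of_ne_zero hne

lemma finrank_add_finrank_orthogonal (hB : B.Nondegenerate) (W : Submodule K V) :
    finrank K W + finrank K (B.orthogonal W) = finrank K V := by
  rw [BilinForm.finrank_orthogonal hB, Nat.add_sub_cancel' W.finrank_le]

lemma IsLagrangian.two_mul_finrank (hB : B.Nondegenerate) (hL : IsLagrangian B L) :
    2 * finrank K L = finrank K V := by
  rw [← finrank_add_finrank_orthogonal hB L, ← hL, two_mul]

lemma IsLagrangian.finrank_eq (hB : B.Nondegenerate) (hC : IsLagrangian B C)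
    (hD : IsLagrangian B D) : finrank K C = finrank K D :=
  Nat.eq_of_mul_eq_mul_left two_pos <|
    (hC.two_mul_finrank hB).trans (hD.two_mul_finrank hB).symm

lemma isLagrangian_of_le_orthogonal (hB : B.Nondegenerate) (hL : L ≤ B.orthogonal L)
    (hdim : finrank K V = 2 * finrank K L) : IsLagrangian B L :=
  Submodule.eq_of_le_of_finrank_le hL <| by
    have := finrank_add_finrank_orthogonal hB L
    lia

lemma IsLagrangian.finrank_inf_ker_add_one (hrefl : B.IsRefl) (hC : IsLagrangian B C)
    (hv : v ∉ C) : finrank K ↥(C ⊓ ker (B v)) + 1 = finrank K C :=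
  finrank_inf_ker_add_one_of_not_le fun hle ↦
    hv (hC.mem_iff.2 fun _ hw ↦ hrefl _ _ (hle hw))

lemma finrank_neighbor (hrefl : B.IsRefl) (hC : IsLagrangian B C) (hv : v ∉ C) :
    finrank K (neighbor B C v) = finrank K C := by
  have hv' : v ∉ C ⊓ ker (B v) := fun h ↦ hv h.1
  rw [neighbor, Submodule.finrank_sup_span_singleton hv', hC.finrank_inf_ker_add_one hrefl hv]

lemma isNeighbor_neighbor (hB : B.Nondegenerate) (hrefl : B.IsRefl) (hC : IsLagrangian B C)
    (hv : v ∉ C) (hvv : B v v = 0) : IsNeighbor_s6 B C (neighbor B C v) where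
  isLagrangian := isLagrangian_of_le_orthogonal hB (neighbor_le_orthogonal hrefl hC hvv) <| by
    rw [finrank_neighbor hrefl hC hv, hC.two_mul_finrank hB]
  finrank_inf_add_one := by
    rw [neighbor_inf_self hv, hC.finrank_inf_ker_add_one hrefl hv]

lemma IsNeighbor_s6.neighbor_eq (hB : B.Nondegenerate) (hrefl : B.IsRefl) (hC : IsLagrangian B C)
    (hD : IsNeighbor_s6 B C D) (hvD : v ∈ D) (hvC : v ∉ C) : neighbor B C v = D := by
  have hinf : D ⊓ C = C ⊓ ker (B v) := by
    refine Submodule.eq_of_le_of_finrank_eq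
      (fun x hx ↦ ⟨hx.2, hD.isLagrangian.apply_eq_zero hvD hx.1⟩) ?_
    have := hD.finrank_inf_add_one
    have := hC.finrank_inf_ker_add_one hrefl hvC
    lia
  have hle : neighbor B C v ≤ D := by
    rw [neighbor, ← hinf]
    exact sup_le inf_le_left ((Submodule.span_singleton_le_iff_mem _ _).2 hvD)
  exact Submodule.eq_of_le_of_finrank_eq hle <|
    (finrank_neighbor hrefl hC hvC).trans (hC.finrank_eq hB hD.isLagrangian)

lemma iUnion_neighbors_sdiff (hB : B.Nondegenerate) (hrefl : B.IsRefl) (hC : IsLagrangian B C)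
    (hSC : S ≤ C) (hS : ∀ v ∈ B.orthogonal S, B v v = 0) :
    ⋃ D ∈ {D | IsNeighbor_s6 B C D ∧ S ≤ D}, ((D : Set V) \ C) = (B.orthogonal S : Set V) \ C := by
  ext v
  simp only [Set.mem_ofPred_eq, Set.mem_iUnion, Set.mem_sdiff, SetLike.mem_coe, exists_prop]
  constructor
  · rintro ⟨D, ⟨hD, hSD⟩, hvD, hvC⟩
    exact ⟨hD.isLagrangian.le_orthogonal hSD hvD, hvC⟩
  · rintro ⟨hvS, hvC⟩
    have hSv : S ≤ C ⊓ ker (B v) := le_inf hSC fun s hs ↦ hrefl _ _ (hvS s hs)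
    exact ⟨neighbor B C v, ⟨isNeighbor_neighbor hB hrefl hC hvC (hS v hvS),
      hSv.trans le_sup_left⟩, mem_neighbor_self B C v, hvC⟩

lemma pairwiseDisjoint_neighbors_sdiff (hB : B.Nondegenerate) (hrefl : B.IsRefl)
    (hC : IsLagrangian B C) :
    {D | IsNeighbor_s6 B C D}.PairwiseDisjoint (fun D ↦ ((D : Set V) \ C)) := by
  refine fun D hD D' hD' hne ↦ Set.disjoint_left.2 fun v hv hv' ↦ hne ?_
  rw [← hD.neighbor_eq hB hrefl hC hv.1 hv.2, hD'.neighbor_eq hB hrefl hC hv'.1 hv'.2]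

end Lagrangian

section Counting

variable {K V : Type*} [Field K] [Finite K] [AddCommGroup V] [Module K V] [FiniteDimensional K V]
  {B : BilinForm K V} {C D S : Submodule K V}

lemma ncard_sdiff_add_pow_finrank_inf (U W : Submodule K V) :
    ((U : Set V) \ W).ncard + Nat.card K ^ finrank K ↥(U ⊓ W) = Nat.card K ^ finrank K U := by
  have : Finite V := Module.finite_of_finite K
  rw [← natCard_eq_pow_finrank (V := U), ← natCard_eq_pow_finrank (V := ↥(U ⊓ W)), add_comm]
  exact Set.ncard_inter_add_ncard_sdiff_eq_ncard (U : Set V) W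

-- The factor `Nat.card K` avoids the exponent `finrank K C - 1`.
lemma IsNeighbor_s6.card_mul_ncard_sdiff (hB : B.Nondegenerate) (hC : IsLagrangian B C)
    (hD : IsNeighbor_s6 B C D) :
    Nat.card K * ((D : Set V) \ C).ncard = Nat.card K ^ finrank K C * (Nat.card K - 1) := by
  rw [Nat.eq_sub_of_add_eq (ncard_sdiff_add_pow_finrank_inf D C),
    hD.isLagrangian.finrank_eq hB hC, ← hD.finrank_inf_add_one, pow_succ, Nat.mul_sub, Nat.mul_sub]
  grind

lemma IsLagrangian.ncard_orthogonal_sdiff (hB : B.Nondegenerate) (hC : IsLagrangian B C)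
    (hSC : S ≤ C) :
    ((B.orthogonal S : Set V) \ C).ncard =
      Nat.card K ^ finrank K C * (Nat.card K ^ (finrank K C - finrank K S) - 1) := by
  have hdim : finrank K (B.orthogonal S) = finrank K C + (finrank K C - finrank K S) := by
    have := finrank_add_finrank_orthogonal hB S
    have := hC.two_mul_finrank hB
    have := Submodule.finrank_mono hSC
    lia
  rw [Nat.eq_sub_of_add_eq (ncard_sdiff_add_pow_finrank_inf _ _),
    inf_eq_right.2 (hC.le_orthogonal hSC), hdim, pow_add, Nat.mul_sub, mul_one]

lemma ncard_neighbors_mul_sub_one (hB : B.Nondegenerate) (hrefl : B.IsRefl)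
    (hC : IsLagrangian B C) (hSC : S ≤ C) (hS : ∀ v ∈ B.orthogonal S, B v v = 0) :
    {D | IsNeighbor_s6 B C D ∧ S ≤ D}.ncard * (Nat.card K - 1) =
      Nat.card K * (Nat.card K ^ (finrank K C - finrank K S) - 1) := by
  have : Finite V := Module.finite_of_finite K
  set 𝓝 := {D | IsNeighbor_s6 B C D ∧ S ≤ D}
  have h𝓝 : 𝓝.Finite := Set.toFinite _
  have hdisj : 𝓝.PairwiseDisjoint (fun D ↦ ((D : Set V) \ C)) :=
    (pairwiseDisjoint_neighbors_sdiff hB hrefl hC).subset fun _ hD ↦ hD.1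
  have hpartition : ((B.orthogonal S : Set V) \ C).ncard =
      ∑ D ∈ h𝓝.toFinset, ((D : Set V) \ C).ncard := by
    rw [← iUnion_neighbors_sdiff hB hrefl hC hSC hS,
      h𝓝.ncard_biUnion (fun _ _ ↦ Set.toFinite _) hdisj, finsum_mem_eq_finite_toFinset_sum]
  have hpos : 0 < Nat.card K ^ finrank K C := pow_pos Nat.card_pos _
  refine Nat.eq_of_mul_eq_mul_left hpos ?_
  calc Nat.card K ^ finrank K C * (𝓝.ncard * (Nat.card K - 1))
      = ∑ D ∈ h𝓝.toFinset, Nat.card K ^ finrank K C * (Nat.card K - 1) := by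
        rw [Finset.sum_const, ← Set.ncard_eq_toFinset_card, smul_eq_mul, mul_left_comm]
    _ = ∑ D ∈ h𝓝.toFinset, Nat.card K * ((D : Set V) \ C).ncard :=
        Finset.sum_congr rfl fun D hD ↦
          (IsNeighbor_s6.card_mul_ncard_sdiff hB hC (h𝓝.mem_toFinset.1 hD).1).symm
    _ = Nat.card K * ((B.orthogonal S : Set V) \ C).ncard := by
        rw [hpartition, Finset.mul_sum]
    _ = Nat.card K ^ finrank K C *
          (Nat.card K * (Nat.card K ^ (finrank K C - finrank K S) - 1)) := by
        rw [hC.ncard_orthogonal_sdiff hB hSC, mul_left_comm]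

lemma ncard_neighbors (hB : B.Nondegenerate) (hrefl : B.IsRefl) (hC : IsLagrangian B C)
    (hSC : S ≤ C) (hS : ∀ v ∈ B.orthogonal S, B v v = 0) :
    {D | IsNeighbor_s6 B C D ∧ S ≤ D}.ncard =
      Nat.card K * ((Nat.card K ^ (finrank K C - finrank K S) - 1) / (Nat.card K - 1)) := by
  have hq : 0 < Nat.card K - 1 := Nat.sub_pos_of_lt Finite.one_lt_card
  have hdvd : Nat.card K - 1 ∣ Nat.card K ^ (finrank K C - finrank K S) - 1 :=
    Nat.sub_one_dvd_pow_sub_one _ _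
  rw [← Nat.mul_div_assoc _ hdvd]
  exact Nat.eq_div_of_mul_eq_left hq.ne' (ncard_neighbors_mul_sub_one hB hrefl hC hSC hS)

end Counting

section Code

/-- The bilinear form `b(x, y) = ∑ i, x i * y i`. -/
def dotForm (R ι : Type*) [CommSemiring R] [Fintype ι] : BilinForm R (ι → R) :=
  dotProductBilin R R

lemma dotForm_isRefl (R ι : Type*) [CommSemiring R] [Fintype ι] : (dotForm R ι).IsRefl :=
  fun x y ↦ (dotProduct_comm y x).trans

lemma dotForm_nondegenerate (R ι : Type*) [CommRing R] [Fintype ι] : (dotForm R ι).Nondegenerate :=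
  (dotForm_isRefl R ι).nondegenerate_iff_separatingLeft.2 fun _ h ↦ dotProduct_eq_zero _ h

lemma dotProduct_self_eq_sq {R : Type} [CommSemiring R] [CharP R 2] {N : ℕ} (v : Fin N → R) :
    v ⬝ᵥ v = (allOnes R N ⬝ᵥ v) ^ 2 := by
  simp only [dotProduct, allOnes, one_mul, sq, CharTwo.sum_mul_self]

lemma dotForm_self_eq_zero_iff {R : Type} [CommRing R] [IsReduced R] [CharP R 2] {N : ℕ}
    (v : Fin N → R) : dotForm R (Fin N) v v = 0 ↔ dotForm R (Fin N) (allOnes R N) v = 0 := by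
  change v ⬝ᵥ v = 0 ↔ allOnes R N ⬝ᵥ v = 0
  rw [dotProduct_self_eq_sq, sq_eq_zero_iff]

variable {F : Type} [Field F]

lemma eq_dualCode_id_iff {N : ℕ} {C : Submodule F (Fin N → F)} :
    C = dualCode id C ↔ IsLagrangian (dotForm F (Fin N)) C := by
  suffices dualCode id C = (dotForm F (Fin N)).orthogonal C by rw [this, IsLagrangian]
  ext v
  exact forall₂_congr fun w _ ↦ Eq.congr_left (dotProduct_comm v w)

lemma finrank_of_eq_dualCode_id {n : ℕ} {C : Submodule F (Fin (2 * n) → F)}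
    (hC : C = dualCode id C) : finrank F C = n := by
  have := (eq_dualCode_id_iff.1 hC).two_mul_finrank (dotForm_nondegenerate F _)
  rw [finrank_fin_fun] at this
  lia

end Code

end KneserHeckeCodes

/-- For the dot product over a field of characteristic two `ω` is the all-ones vector, whereas for
an alternating form one takes `ω = 0`. -/
theorem sum_alphaE_qEI_general {K V : Type*} [Field K] [Finite K] [AddCommGroup V] [Module K V]
    [FiniteDimensional K V] {B : LinearMap.BilinForm K V} (hB : B.Nondegenerate)
    (hrefl : B.IsRefl) {ω : V} (hω : ∀ v, B v v = 0 ↔ B ω v = 0) {C : Submodule K V}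
    (hC : IsLagrangian B C) {ι : Sort*} {c : ι → V} (hc : ∀ j, c j ∈ C) {r : ℕ}
    (hr : Module.finrank K (Submodule.span K (insert ω (Set.range c))) = r) :
    Nat.card {ED : Submodule K V × Submodule K V //
        ED.1 ≤ C ∧ Module.finrank K ED.1 + 1 = Module.finrank K C ∧ (∀ j, c j ∈ ED.1) ∧
        IsLagrangian B ED.2 ∧ ED.2 ⊓ C = ED.1} =
      Nat.card K *
        ((Nat.card K ^ (Module.finrank K C - r) - 1) / (Nat.card K - 1)) := by
  have hisotropic : ∀ v ∈ B.orthogonal (Submodule.span K (insert ω (Set.range c))), B v v = 0 :=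
    fun v hv ↦ (hω v).2 (hv ω (Submodule.subset_span (Set.mem_insert _ _)))
  rw [card_pairs_eq_ncard_neighbors hrefl hω hc, ← hr]
  exact ncard_neighbors hB hrefl hC (hC.span_insert_range_le hrefl hω hc) hisotropic

/-- For `q` even, a self-dual code `C ≤ F_q^{2n}` and `c^(1), …, c^(m) ∈ C`
with `dim⟨1, c^(1), …, c^(m)⟩ = m + 1` (`m ≤ n - 1`), the number of pairs `(E, D)` with
`E ≤ C` of dimension `n-1` containing all `c^(i)` and `D` self-dual with `D ∩ C = E`
equals `q·(q^{n-m-1} - 1)/(q - 1)`. -/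
theorem sum_alphaE_qEI
    {F : Type} [Field F] [Fintype F] (hq : Even (Fintype.card F)) {n : ℕ}
    (C : Submodule F (Fin (2 * n) → F)) (hC : C = dualCode (id : F → F) C)
    {m : ℕ} (hm : m + 1 ≤ n) (c : Fin m → (Fin (2 * n) → F)) (hc : ∀ j, c j ∈ C)
    (hrank : Module.finrank F
      ↥(Submodule.span F (insert (allOnes F (2 * n)) (Set.range c))) = m + 1) :
    Nat.card {ED : Submodule F (Fin (2 * n) → F) × Submodule F (Fin (2 * n) → F) //
        ED.1 ≤ C ∧ Module.finrank F ↥ED.1 + 1 = n ∧ (∀ j, c j ∈ ED.1) ∧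
        ED.2 = dualCode (id : F → F) ED.2 ∧ ED.2 ⊓ C = ED.1} =
      Fintype.card F * ((Fintype.card F ^ (n - m - 1) - 1) / (Fintype.card F - 1)) := by
  have : CharP F 2 := ringChar.of_eq (FiniteField.even_card_iff_char_two.2 (Nat.even_iff.1 hq))
  simpa only [← eq_dualCode_id_iff, finrank_of_eq_dualCode_id hC, Nat.card_eq_fintype_card,
    Nat.sub_sub] using sum_alphaE_qEI_general (dotForm_nondegenerate F _) (dotForm_isRefl F _)
      dotForm_self_eq_zero_iff (eq_dualCode_id_iff.1 hC) hc hrank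
end
end

section
/- Let q be even and let E ≤ F_q^{2n} be a self-orthogonal subspace (E ⊆ E^⊥) of dimension n−1 containing the all-ones vector 1 = (1,…,1). Then every subspace D with E ≤ D ≤ E^⊥ and dim D = n is self-dual; in particular, the number of self-dual codes D ≤ F_q^{2n} containing E is exactly q+1. -/
noncomputable section

open KneserHeckeCodes

/-!
In characteristic two `b(v, v) = (∑ i, v i) ^ 2 = b(v, 1) ^ 2`, so `1 ∈ E` makes `b` alternating on
`E^⊥`. A subspace `D` between `E` and `E^⊥` with `dim D = dim E + 1` is spanned by `E` and one
further vector, hence is totally isotropic, and it is self-dual when its dimension is half that of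
the ambient space. The self-dual codes containing `E` are therefore the lines of the plane
`E^⊥ / E`, and the projective line over `F_q` has `q + 1` points.
-/

namespace KneserHeckeCodes

section Covering

variable {K V : Type*} [DivisionRing K] [AddCommGroup V] [Module K V]

theorem covBy_iff_finrank_eq_add_one {E D : Submodule K V} [FiniteDimensional K D] (h : E ≤ D) :
    E ⋖ D ↔ Module.finrank K D = Module.finrank K E + 1 := by
  rw [covBy_iff_quot_is_simple h, isSimpleModule_iff_finrank_eq_one,
    ← (E.comap D.subtype).finrank_quotient_add_finrank,
    (Submodule.comapSubtypeEquivOfLe h).finrank_eq]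
  omega

theorem card_covBy_of_finrank_quotient_eq_two [Finite K] (E : Submodule K V)
    (h : Module.finrank K (V ⧸ E) = 2) :
    Nat.card {D : Submodule K V // E ⋖ D} = Nat.card K + 1 :=
  calc Nat.card {D : Submodule K V // E ⋖ D}
      = Nat.card {D : Set.Ici E // E ⋖ (D : Submodule K V)} :=
        Nat.card_congr (Equiv.subtypeSubtypeEquivSubtype CovBy.le).symm
    _ = Nat.card {L : Submodule K (V ⧸ E) // Module.finrank K L = 1} :=
        Nat.card_congr <| (Submodule.comapMkQRelIso E).symm.toEquiv.subtypeEquiv fun D => by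
          rw [← Submodule.isAtom_iff_finrank_eq_one, ← Set.Ici.isAtom_iff]
          exact ((Submodule.comapMkQRelIso E).symm.isAtom_iff D).symm
    _ = Nat.card (Projectivization K (V ⧸ E)) :=
        Nat.card_congr (Projectivization.equivSubmodule K (V ⧸ E)).symm
    _ = Nat.card K + 1 := Projectivization.card_of_finrank_two K (V ⧸ E) h

theorem comap_subtype_covBy_iff {E M : Submodule K V} (hEM : E ≤ M) (P : Submodule K M) :
    E.comap M.subtype ⋖ P ↔ E ⋖ P.map M.subtype := by
  have hrange : Set.range (Submodule.MapSubtype.orderEmbedding M) = Set.Iic M := by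
    ext D
    exact ⟨fun ⟨Q, hQ⟩ => hQ ▸ Submodule.map_subtype_le M Q,
      fun hD => ⟨D.comap M.subtype, by
        simpa only [Submodule.map_subtype_embedding_eq, Submodule.map_comap_subtype]
          using inf_eq_right.2 hD⟩⟩
  rw [← Set.OrdConnected.apply_covBy_apply_iff (Submodule.MapSubtype.orderEmbedding M)
      (hrange ▸ Set.ordConnected_Iic), Submodule.map_subtype_embedding_eq,
    Submodule.map_subtype_embedding_eq, Submodule.map_comap_subtype, inf_eq_right.2 hEM]

theorem card_covBy_le_of_finrank_eq_add_two [Finite K] {E M : Submodule K V} (hEM : E ≤ M)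
    (h : Module.finrank K M = Module.finrank K E + 2) :
    Nat.card {D : Submodule K V // E ⋖ D ∧ D ≤ M} = Nat.card K + 1 := by
  have : FiniteDimensional K M := Module.finite_of_finrank_pos (by omega)
  have hquot : Module.finrank K (M ⧸ E.comap M.subtype) = 2 := by
    have hsum := (E.comap M.subtype).finrank_quotient_add_finrank
    rw [(Submodule.comapSubtypeEquivOfLe hEM).finrank_eq] at hsum
    omega
  calc Nat.card {D : Submodule K V // E ⋖ D ∧ D ≤ M}
      = Nat.card {D : Set.Iic M // E ⋖ (D : Submodule K V)} :=
        Nat.card_congr <| (Equiv.subtypeEquivRight fun _ => and_comm).trans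
          (Equiv.subtypeSubtypeEquivSubtypeInter (· ≤ M) (E ⋖ ·)).symm
    _ = Nat.card {P : Submodule K M // E.comap M.subtype ⋖ P} :=
        Nat.card_congr (M.mapIic.toEquiv.subtypeEquiv (comap_subtype_covBy_iff hEM)).symm
    _ = Nat.card K + 1 := card_covBy_of_finrank_quotient_eq_two _ hquot

end Covering

section BilinForm

variable {K V : Type*} [Field K] [AddCommGroup V] [Module K V] {B : LinearMap.BilinForm K V}
  {E D : Submodule K V}

theorem le_orthogonal_self_of_covBy (hED : E ⋖ D) (hDE : D ≤ B.orthogonal E)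
    (halt : ∀ v ∈ D, B v v = 0) : D ≤ B.orthogonal D := by
  obtain ⟨v, hvD, hvE⟩ := SetLike.exists_of_lt hED.lt
  have hspan : Submodule.span K {v} ⊔ E = D :=
    (hED.eq_or_eq le_sup_right (sup_le (by simpa using hvD) hED.le)).resolve_left fun h =>
      hvE (h ▸ Submodule.mem_sup_left (Submodule.mem_span_singleton_self v))
  have hE : E ≤ B.orthogonal D := fun e he d hd =>
    have hrefl : (B.restrict D).IsRefl := LinearMap.IsAlt.isRefl fun x => halt x x.2
    hrefl ⟨e, hED.le he⟩ ⟨d, hd⟩ (hDE hd e he)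
  have hv : v ∈ B.orthogonal D := by
    have hker : Submodule.span K {v} ⊔ E ≤ LinearMap.ker (B.flip v) :=
      sup_le (by simpa using halt v hvD) (hDE hvD)
    exact hspan ▸ hker
  calc D = Submodule.span K {v} ⊔ E := hspan.symm
    _ ≤ B.orthogonal D := sup_le (by simpa using hv) hE

variable [FiniteDimensional K V]

theorem eq_orthogonal_self_iff (hB : B.Nondegenerate) :
    D = B.orthogonal D ↔
      D ≤ B.orthogonal D ∧ Module.finrank K V = 2 * Module.finrank K D := by
  have hperp := LinearMap.BilinForm.finrank_orthogonal hB D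
  have hle := D.finrank_le
  refine ⟨fun h => ⟨h.le, ?_⟩, fun ⟨h, _⟩ => Submodule.eq_of_le_of_finrank_eq h (by omega)⟩
  rw [← h] at hperp
  omega

theorem eq_orthogonal_self_and_le_iff_covBy (hB : B.Nondegenerate)
    (halt : ∀ v ∈ B.orthogonal E, B v v = 0)
    (hdim : Module.finrank K V = 2 * (Module.finrank K E + 1)) :
    D = B.orthogonal D ∧ E ≤ D ↔ E ⋖ D ∧ D ≤ B.orthogonal E := by
  rw [eq_orthogonal_self_iff hB]
  constructor
  · rintro ⟨⟨hD, hfin⟩, hED⟩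
    exact ⟨(covBy_iff_finrank_eq_add_one hED).2 (by omega),
      hD.trans (LinearMap.BilinForm.orthogonal_le hED)⟩
  · rintro ⟨hED, hDE⟩
    have hfin := (covBy_iff_finrank_eq_add_one hED.le).1 hED
    exact ⟨⟨le_orthogonal_self_of_covBy hED hDE fun v hv => halt v (hDE hv), by omega⟩, hED.le⟩

end BilinForm

section DotProduct

theorem dotProduct_self_eq_sum_sq {R ι : Type*} [CommSemiring R] [CharP R 2] [Fintype ι]
    (v : ι → R) : v ⬝ᵥ v = (∑ i, v i) ^ 2 := by
  rw [sq, CharTwo.sum_mul_self, dotProduct]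

theorem nondegenerate_dotProductBilin (R ι : Type*) [CommSemiring R] [Fintype ι] :
    (dotProductBilin R R : LinearMap.BilinForm R (ι → R)).Nondegenerate :=
  ⟨dotProduct_eq_zero, fun v hv => dotProduct_eq_zero v fun w => dotProduct_comm v w ▸ hv w⟩

variable {F : Type} [Field F] {N : ℕ}

theorem dualCode_id (C : Submodule F (Fin N → F)) :
    dualCode id C = LinearMap.BilinForm.orthogonal (dotProductBilin F F) C := by
  ext v
  exact forall₂_congr fun c _ => by rw [dotProductBilin_apply_apply, dotProduct_comm]; rfl

theorem dotProduct_self_eq_zero_of_mem_dualCode [CharP F 2] {C : Submodule F (Fin N → F)}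
    (hone : allOnes F N ∈ C) {v : Fin N → F} (hv : v ∈ dualCode id C) : v ⬝ᵥ v = 0 := by
  have hsum : ∑ i, v i = 0 := by simpa only [id, allOnes, mul_one] using hv _ hone
  rw [dotProduct_self_eq_sum_sq, hsum, zero_pow two_ne_zero]

end DotProduct

end KneserHeckeCodes

theorem selfDual_count_above_qEI_general {K V : Type*} [Field K] [Finite K] [AddCommGroup V]
    [Module K V] [FiniteDimensional K V] {B : LinearMap.BilinForm K V} (hB : B.Nondegenerate)
    {n : ℕ} (hV : Module.finrank K V = 2 * n) {E : Submodule K V} (hE : E ≤ B.orthogonal E)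
    (hdim : Module.finrank K E + 1 = n) (halt : ∀ v ∈ B.orthogonal E, B v v = 0) :
    (∀ D : Submodule K V, E ≤ D → D ≤ B.orthogonal E → Module.finrank K D = n →
        D = B.orthogonal D) ∧
    Nat.card {D : Submodule K V // D = B.orthogonal D ∧ E ≤ D} = Nat.card K + 1 := by
  subst hdim
  have hiff (D : Submodule K V) : D = B.orthogonal D ∧ E ≤ D ↔ E ⋖ D ∧ D ≤ B.orthogonal E :=
    eq_orthogonal_self_and_le_iff_covBy hB halt hV
  have hplane : Module.finrank K (B.orthogonal E) = Module.finrank K E + 2 := by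
    rw [LinearMap.BilinForm.finrank_orthogonal hB]
    omega
  refine ⟨fun D hED hDE hD => ?_, ?_⟩
  · exact ((hiff D).2 ⟨(covBy_iff_finrank_eq_add_one hED).2 hD, hDE⟩).1
  · rw [Nat.card_congr (Equiv.subtypeEquivRight hiff)]
    exact card_covBy_le_of_finrank_eq_add_two hE hplane

/-- For `q` even and a self-orthogonal subspace `E ≤ F_q^{2n}` of dimension
`n-1` containing the all-ones vector, every `D` with `E ≤ D ≤ E^⊥` and `dim D = n` is
self-dual; in particular there are exactly `q + 1` self-dual codes containing `E`. -/
theorem selfDual_count_above_qEI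
    {F : Type} [Field F] [Fintype F] (hq : Even (Fintype.card F)) {n : ℕ}
    (E : Submodule F (Fin (2 * n) → F)) (hEso : E ≤ dualCode (id : F → F) E)
    (hdim : Module.finrank F ↥E + 1 = n) (hone : allOnes F (2 * n) ∈ E) :
    (∀ D : Submodule F (Fin (2 * n) → F), E ≤ D → D ≤ dualCode (id : F → F) E →
        Module.finrank F ↥D = n → D = dualCode (id : F → F) D) ∧
    Nat.card {D : Submodule F (Fin (2 * n) → F) //
        D = dualCode (id : F → F) D ∧ E ≤ D} = Fintype.card F + 1 := by
  have : CharP F 2 := ringChar.of_eq (FiniteField.even_card_iff_char_two.2 (Nat.even_iff.1 hq))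
  have halt : ∀ v ∈ dualCode id E, v ⬝ᵥ v = 0 := fun _ =>
    dotProduct_self_eq_zero_of_mem_dualCode hone
  simp only [dualCode_id, ← Nat.card_eq_fintype_card] at hEso halt ⊢
  exact selfDual_count_above_qEI_general (nondegenerate_dotProductBilin F _)
    (Module.finrank_fin_fun F) hEso hdim halt
end
end

section
/- Let C, D ≤ F_q^N be codes with dim C = dim D = n, let c = (c^(1),…,c^(n)) be an ordered basis of C, and suppose a_{mon(c)}(D) > 0, i.e. there exists an n-tuple d ∈ D^n with mon(d) = mon(c). Then D is equivalent to C, i.e. D = π(C) for some coordinate permutation π ∈ S_N. -/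
noncomputable section

open KneserHeckeCodes

/-!
Equal monomials mean that the matrices with rows `c` and `d` have the same columns with the same
multiplicities, so some permutation `π` of the coordinates carries `c` to `d`. It carries `C`, the
span of `c`, onto the span of `d`, a subspace of `D` of the same dimension as `C`, hence all of `D`.
-/

theorem exists_equiv_comp_eq_of_natCard_fiber_eq {α β γ : Type*} {f : α → γ} {g : β → γ}
    [∀ v, Finite {a // f a = v}] [∀ v, Finite {b // g b = v}]
    (h : ∀ v, Nat.card {a // f a = v} = Nat.card {b // g b = v}) :
    ∃ e : α ≃ β, g ∘ e = f := by
  have e (v : γ) : {a // f a = v} ≃ {b // g b = v} := (Finite.card_eq.mp (h v)).some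
  exact ⟨Equiv.ofFiberEquiv e, funext (Equiv.ofFiberEquiv_map e)⟩

namespace KneserHeckeCodes

theorem mon_apply_eq_natCard_fiber {F : Type} {m N : ℕ} (c : Fin m → Fin N → F) (v : Fin m → F) :
    mon c v = Nat.card {i // (fun j ↦ c j i) = v} := by
  simp only [mon, funext_iff]

theorem exists_perm_comp_eq_of_mon_eq {F : Type} {m N : ℕ} {c d : Fin m → Fin N → F}
    (h : mon d = mon c) : ∃ π : Equiv.Perm (Fin N), ∀ j, c j ∘ π = d j := by
  obtain ⟨π, hπ⟩ := exists_equiv_comp_eq_of_natCard_fiber_eq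
    (f := fun i j ↦ d j i) (g := fun i j ↦ c j i) fun v ↦ by
      simpa only [mon_apply_eq_natCard_fiber] using congrFun h v
  exact ⟨π, fun j ↦ funext fun i ↦ congrFun (congrFun hπ i) j⟩

section Codes

variable {F : Type} [Field F] {N : ℕ}

theorem exists_mon_eq_of_aX_pos {m : ℕ} {X : (Fin m → F) → ℕ} {D : Submodule F (Fin N → F)}
    (h : 0 < aX X D) : ∃ d : Fin m → Fin N → F, (∀ j, d j ∈ D) ∧ mon d = X :=
  nonempty_subtype.mp (Nat.card_pos_iff.mp h).1

theorem permCode_span_range {ι : Type*} (π : Equiv.Perm (Fin N)) (c : ι → Fin N → F) :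
    permCode π (Submodule.span F (Set.range c)) =
      Submodule.span F (Set.range fun j ↦ c j ∘ π) := by
  rw [permCode, Submodule.map_span, ← Set.range_comp]
  rfl

theorem finrank_permCode (π : Equiv.Perm (Fin N)) (C : Submodule F (Fin N → F)) :
    Module.finrank F (permCode π C) = Module.finrank F C :=
  (LinearEquiv.funCongrLeft F F π).finrank_map_eq C

end Codes

end KneserHeckeCodes

theorem equivCode_of_aX_mon_basis_pos_general {F : Type} [Field F] {N m : ℕ}
    (C D : Submodule F (Fin N → F)) (hDC : Module.finrank F D ≤ Module.finrank F C)
    (c : Fin m → Fin N → F) (hcs : Submodule.span F (Set.range c) = C)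
    (ha : 0 < aX (mon c) D) :
    equivCode C D := by
  obtain ⟨d, hdD, hmon⟩ := exists_mon_eq_of_aX_pos ha
  obtain ⟨π, hπ⟩ := exists_perm_comp_eq_of_mon_eq hmon
  have hle : permCode π C ≤ D := by
    rw [← hcs, permCode_span_range, Submodule.span_le, Set.range_subset_iff]
    exact fun j ↦ (hπ j).symm ▸ hdD j
  exact ⟨π, Submodule.eq_of_le_of_finrank_le hle (hDC.trans_eq (finrank_permCode π C).symm)⟩

/-- If `C, D ≤ F_q^N` are codes of dimension `n`, `c` is an ordered basis
of `C`, and `a_{mon(c)}(D) > 0`, then `D` is (permutation) equivalent to `C`. -/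
theorem equivCode_of_aX_mon_basis_pos
    {F : Type} [Field F] [Fintype F] {N n : ℕ}
    (C D : Submodule F (Fin N → F))
    (hC : Module.finrank F ↥C = n) (hD : Module.finrank F ↥D = n)
    (c : Fin n → (Fin N → F)) (hci : LinearIndependent F c)
    (hcs : Submodule.span F (Set.range c) = C)
    (ha : 0 < aX (mon c) D) :
    equivCode C D :=
  equivCode_of_aX_mon_basis_pos_general C D (hD.trans hC.symm).le c hcs ha
end
end
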